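/- Let X be a finite free ℤ-module. For any complex number s and any finite set of characters, the following holds: if c ∈ ℂ is such that p^c is algebraic over ℚ for at least three distinct prime numbers p, then c ∈ ℚ. (Corollary of the six exponentials theorem.) -/

import Mathlib

/-!
Suppose that all six numbers `exp (x i * y j)` lie in a number field `K`. Siegel's lemma gives a
nonzero exponential sum `F z = ∑ l, ξ l * exp ((∑ i, l i • x i) * z)` with coefficients in `𝓞 K` of
small house that vanishes at all points `∑ j, t j • y j` with `t j < M`. If `F` vanishes at these
points for `t j < S`, which are `S ^ 3` distinct zeros, the Schwarz lemma makes `F` so small at the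
points with `t j ≤ S` that its value there, an element of `K` with controlled house and denominator,
must be zero by Liouville's inequality. So `F` vanishes at every `∑ j, t j • y j`, contradicting the
linear independence of the characters `t ↦ exp ((∑ i, l i • x i) * ∑ j, t j • y j)`.
-/

open Module NumberField

section Schwarz

variable {E : Type*} [NormedAddCommGroup E] [NormedSpace ℂ E] [CompleteSpace E]

theorem exists_differentiableOn_eq_prod_sub_smul {U : Set ℂ} (hU : IsOpen U) (s : Finset ℂ)
    (hsU : ↑s ⊆ U) {f : ℂ → E} (hf : DifferentiableOn ℂ f U) (hfs : ∀ a ∈ s, f a = 0) :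
    ∃ g : ℂ → E, DifferentiableOn ℂ g U ∧ ∀ z, f z = (∏ a ∈ s, (z - a)) • g z := by
  classical
  induction s using Finset.induction_on generalizing f with
  | empty => exact ⟨f, hf, by simp⟩
  | insert a s has ih =>
    rw [Finset.coe_insert, Set.insert_subset_iff] at hsU
    rw [Finset.forall_mem_insert] at hfs
    have hslope : ∀ z, f z = (z - a) • dslope f a z := fun z ↦ by
      rw [sub_smul_dslope, hfs.1, sub_zero]
    have hslope_zero : ∀ b ∈ s, dslope f a b = 0 := fun b hb ↦ by
      have hba : b - a ≠ 0 := sub_ne_zero.2 (ne_of_mem_of_not_mem hb has)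
      exact (smul_eq_zero.1 ((hslope b).symm.trans (hfs.2 b hb))).resolve_left hba
    obtain ⟨g, hg, hfg⟩ := ih hsU.2
      ((Complex.differentiableOn_dslope (hU.mem_nhds hsU.1)).2 hf) hslope_zero
    refine ⟨g, hg, fun z ↦ ?_⟩
    rw [hslope, hfg, Finset.prod_insert has, mul_smul]

theorem norm_le_pow_card_mul_of_forall_eq_zero {U : Set ℂ} (hU : IsOpen U) {f : ℂ → E}
    (hf : DifferentiableOn ℂ f U) {c : ℂ} {r R B : ℝ} (hrR : r < R)
    (hRU : Metric.closedBall c R ⊆ U) {s : Finset ℂ} (hs : ∀ a ∈ s, dist a c ≤ r)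
    (hfs : ∀ a ∈ s, f a = 0) (hB : ∀ z, dist z c = R → ‖f z‖ ≤ B) {w : ℂ} (hw : dist w c ≤ r) :
    ‖f w‖ ≤ (2 * r / (R - r)) ^ s.card * B := by
  have hsU : (s : Set ℂ) ⊆ U := fun a ha ↦ hRU ((hs a ha).trans hrR.le)
  obtain ⟨g, hg, hfg⟩ := exists_differentiableOn_eq_prod_sub_smul hU s hsU hf hfs
  have hR : 0 < R := (dist_nonneg.trans hw).trans_lt hrR
  have hRr : 0 < R - r := sub_pos.2 hrR
  have hg_sphere : ∀ z ∈ frontier (Metric.ball c R), ‖g z‖ ≤ B / (R - r) ^ s.card := by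
    intro z hz
    rw [frontier_ball c hR.ne', Metric.mem_sphere] at hz
    have hprod : (R - r) ^ s.card ≤ ‖∏ a ∈ s, (z - a)‖ := by
      rw [norm_prod, ← Finset.prod_const]
      refine Finset.prod_le_prod (fun _ _ ↦ hRr.le) fun a ha ↦ ?_
      rw [← dist_eq_norm]
      linarith [dist_triangle_left z c a, dist_comm z a, hs a ha, dist_triangle z a c]
    rw [le_div_iff₀' (by positivity)]
    calc (R - r) ^ s.card * ‖g z‖ ≤ ‖∏ a ∈ s, (z - a)‖ * ‖g z‖ := by gcongr
      _ = ‖f z‖ := by rw [hfg, norm_smul]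
      _ ≤ B := hB z hz
  have hgw : ‖g w‖ ≤ B / (R - r) ^ s.card :=
    Complex.norm_le_of_forall_mem_frontier_norm_le Metric.isBounded_ball
      (hg.diffContOnCl_ball hRU) hg_sphere (subset_closure (hw.trans_lt hrR))
  have hr : 0 ≤ r := dist_nonneg.trans hw
  have hprod : ‖∏ a ∈ s, (w - a)‖ ≤ (2 * r) ^ s.card := by
    rw [norm_prod, ← Finset.prod_const]
    refine Finset.prod_le_prod (fun _ _ ↦ norm_nonneg _) fun a ha ↦ ?_
    rw [← dist_eq_norm]
    linarith [dist_triangle_right w a c, hs a ha]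
  calc ‖f w‖ = ‖∏ a ∈ s, (w - a)‖ * ‖g w‖ := by rw [hfg, norm_smul]
    _ ≤ (2 * r) ^ s.card * (B / (R - r) ^ s.card) := by gcongr
    _ = (2 * r / (R - r)) ^ s.card * B := by rw [div_pow]; ring

end Schwarz

section LinearCombination

variable {ι κ E : Type*}

theorem norm_sum_nsmul_le [Fintype ι] [SeminormedAddCommGroup E] {t : ι → ℕ} {S : ℕ}
    (ht : ∀ i, t i ≤ S) (v : ι → E) : ‖∑ i, t i • v i‖ ≤ S * ∑ i, ‖v i‖ := by
  rw [Finset.mul_sum]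
  refine norm_sum_le_of_le _ fun i _ ↦ norm_nsmul_le.trans ?_
  gcongr
  exact ht i

theorem injective_sum_nsmul [Fintype ι] [AddCommMonoid E] {v : ι → E}
    (hv : LinearIndependent ℕ v) (L : ℕ) :
    Function.Injective fun l : ι → Fin L ↦ ∑ i, (l i : ℕ) • v i := fun _ _ hl ↦
  funext fun i ↦ Fin.ext (Fintype.linearIndependent_iffₛ.1 hv _ _ hl i)

theorem eq_of_forall_exp_mul_eq [Nontrivial κ] {y : κ → ℂ} (hy : LinearIndependent ℚ y)
    {w w' : ℂ} (h : ∀ j, Complex.exp (w * y j) = Complex.exp (w' * y j)) : w = w' := by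
  choose n hn using fun j ↦ Complex.exp_eq_exp_iff_exists_int.1 (h j)
  obtain ⟨i, j, hij⟩ := exists_pair_ne κ
  by_contra hww'
  have hyn : n j • y i + (-n i) • y j = 0 := by
    refine (mul_eq_zero.1 ?_).resolve_left (sub_ne_zero.2 hww')
    simp only [zsmul_eq_mul]
    push_cast
    linear_combination (n j : ℂ) * hn i - (n i : ℂ) * hn j
  have hind := (LinearIndepOn.pair_iff y hij).1 ((hy.restrict_scalars' ℤ).linearIndepOn _)
  have hnj : n j = 0 := (hind _ _ hyn).1
  have hwj : w * y j = w' * y j := by simpa [hnj] using hn j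
  exact hww' (mul_right_cancel₀ (hy.ne_zero j) hwj)

end LinearCombination

section ExponentialSum

variable {σ κ : Type*} [Fintype σ] [Fintype κ]

/-- The exponential sum with frequencies `w s` and coefficients `b s`. The auxiliary function of the
transcendence argument is of this form, with frequencies `∑ i, l i • x i`. -/
noncomputable def expSum (w b : σ → ℂ) (z : ℂ) : ℂ := ∑ s, b s * Complex.exp (w s * z)

theorem differentiable_expSum (w b : σ → ℂ) : Differentiable ℂ (expSum w b) := by
  unfold expSum
  fun_prop

theorem norm_expSum_le {w b : σ → ℂ} {W B : ℝ} (hw : ∀ s, ‖w s‖ ≤ W) (hb : ∀ s, ‖b s‖ ≤ B)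
    (z : ℂ) : ‖expSum w b z‖ ≤ Fintype.card σ * (B * Real.exp (W * ‖z‖)) := by
  have hterm : ∀ s, ‖b s * Complex.exp (w s * z)‖ ≤ B * Real.exp (W * ‖z‖) := fun s ↦ by
    have hexp : ‖Complex.exp (w s * z)‖ ≤ Real.exp (W * ‖z‖) := by
      refine (Complex.norm_exp_le_exp_norm _).trans (Real.exp_le_exp.2 ?_)
      rw [norm_mul]
      gcongr
      exact hw s
    rw [norm_mul]
    exact mul_le_mul (hb s) hexp (norm_nonneg _) ((norm_nonneg _).trans (hb s))
  calc ‖expSum w b z‖ ≤ ∑ _s : σ, B * Real.exp (W * ‖z‖) := norm_sum_le_of_le _ fun s _ ↦ hterm s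
    _ = Fintype.card σ * (B * Real.exp (W * ‖z‖)) := by simp

theorem eq_zero_of_forall_expSum_eq_zero [Nontrivial κ] {y : κ → ℂ} (hy : LinearIndependent ℚ y)
    {w b : σ → ℂ} (hw : Function.Injective w)
    (h : ∀ t : κ → ℕ, expSum w b (∑ j, t j • y j) = 0) : b = 0 := by
  classical
  let χ (s : σ) : Multiplicative (κ → ℕ) →* ℂ :=
    { toFun := fun t ↦ Complex.exp (w s * ∑ j, t.toAdd j • y j)
      map_one' := by simp
      map_mul' := fun t u ↦ by
        simp only [toAdd_mul, Pi.add_apply, add_smul, Finset.sum_add_distrib, mul_add,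
          Complex.exp_add] }
  have hχ : Function.Injective χ := by
    intro s s' hss'
    refine hw (eq_of_forall_exp_mul_eq hy fun j ↦ ?_)
    simpa [χ, Pi.single_apply] using
      DFunLike.congr_fun hss' (Multiplicative.ofAdd (Pi.single j 1))
  have hind := (linearIndependent_monoidHom (Multiplicative (κ → ℕ)) ℂ).comp χ hχ
  refine funext (Fintype.linearIndependent_iff.1 hind b (funext fun t ↦ ?_))
  simpa [expSum, χ] using h t.toAdd

theorem norm_expSum_le_of_forall_lt_eq_zero {w b : σ → ℂ} {W B : ℝ} (hw : ∀ s, ‖w s‖ ≤ W)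
    (hb : ∀ s, ‖b s‖ ≤ B) {y : κ → ℂ} (hy : LinearIndependent ℕ y) {S : ℕ} (hS : 0 < S)
    (hzero : ∀ t : κ → ℕ, (∀ j, t j < S) → expSum w b (∑ j, t j • y j) = 0)
    {t : κ → ℕ} (ht : ∀ j, t j ≤ S) :
    ‖expSum w b (∑ j, t j • y j)‖ ≤ (1 / 2) ^ S ^ Fintype.card κ *
      (Fintype.card σ * (B * Real.exp (W * (5 * (S * (1 + ∑ j, ‖y j‖)))))) := by
  classical
  set r : ℝ := S * (1 + ∑ j, ‖y j‖)
  have hr : 0 < r := by positivity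
  have hnorm : ∀ u : κ → ℕ, (∀ j, u j ≤ S) → dist (∑ j, u j • y j) 0 ≤ r := fun u hu ↦ by
    rw [dist_zero_right]
    exact (norm_sum_nsmul_le hu y).trans (by simp only [r]; gcongr; linarith)
  let zeros : Finset ℂ := Finset.univ.image fun u : κ → Fin S ↦ ∑ j, (u j : ℕ) • y j
  have hcard : zeros.card = S ^ Fintype.card κ := by
    rw [Finset.card_image_of_injective _ (injective_sum_nsmul hy S), Finset.card_univ,
      Fintype.card_fun, Fintype.card_fin]
  have hschwarz := norm_le_pow_card_mul_of_forall_eq_zero isOpen_univ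
    (differentiable_expSum w b).differentiableOn (c := 0) (R := 5 * r)
    (B := Fintype.card σ * (B * Real.exp (W * (5 * r)))) (s := zeros)
    (by linarith) (Set.subset_univ _)
    (Finset.forall_mem_image.2 fun u _ ↦ hnorm _ fun j ↦ (u j).2.le)
    (Finset.forall_mem_image.2 fun u _ ↦ hzero _ fun j ↦ (u j).2)
    (fun z hz ↦ by rw [← hz, dist_zero_right]; exact norm_expSum_le hw hb z) (hnorm t ht)
  rwa [hcard, show 2 * r / (5 * r - r) = 1 / 2 by field_simp; norm_num] at hschwarz

end ExponentialSum

section House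

universe u v

variable {K : Type*} [Field K] [NumberField K]

theorem house_prod_le_prod_house {ι : Type*} (s : Finset ι) (f : ι → K) :
    house (∏ i ∈ s, f i) ≤ ∏ i ∈ s, house (f i) := by
  simpa only [house, map_prod] using Finset.norm_prod_le s fun i ↦ canonicalEmbedding K (f i)

theorem eq_zero_of_norm_embedding_mul_pow_lt_one (φ : K →+* ℂ) {β : 𝓞 K} {ε Q : ℝ}
    (hε : ‖φ β‖ ≤ ε) (hQ : house (β : K) ≤ Q) (hεQ : ε * Q ^ (finrank ℚ K - 1) < 1) : β = 0 := by
  by_contra hβ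
  have hnorm : (1 : ℝ) ≤ |Algebra.norm ℤ β| :=
    mod_cast Int.one_le_abs (Algebra.norm_ne_zero_iff.2 hβ)
  refine hεQ.not_ge ?_
  calc (1 : ℝ) ≤ ‖Algebra.norm ℚ (β : K)‖ := by
        rwa [← Algebra.coe_norm_int, ← Rat.norm_cast_real, Rat.cast_intCast, Real.norm_eq_abs,
          ← Int.cast_abs]
    _ ≤ ‖φ β‖ * house (β : K) ^ (finrank ℚ K - 1) := norm_norm_le_norm_mul_house_pow _ φ
    _ ≤ ε * Q ^ (finrank ℚ K - 1) :=
        mul_le_mul hε (pow_le_pow_left₀ (house_nonneg _) hQ _)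
          (pow_nonneg (house_nonneg _) _) ((norm_nonneg _).trans hε)

variable (K) in
theorem exists_ne_zero_mulVec_eq_zero_house_le : ∃ C : ℝ, 1 ≤ C ∧
    ∀ {α : Type u} {β : Type v} [Fintype α] [Fintype β], 0 < Fintype.card α →
      Fintype.card β = 2 * Fintype.card α → ∀ (a : Matrix α β (𝓞 K)) {A : ℝ}, a ≠ 0 →
      (∀ k l, house (a k l : K) ≤ A) →
      ∃ ξ : β → 𝓞 K, ξ ≠ 0 ∧ a.mulVec ξ = 0 ∧
        ∀ l, house (ξ l : K) ≤ C * Fintype.card β * A := by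
  classical
  -- The constant of the library's Siegel lemma is private, but it depends only on `K`.
  obtain ⟨c, hc⟩ : ∃ c : ℝ, ∀ {α : Type u} {β : Type v} [Fintype α] [Fintype β],
      0 < Fintype.card α → Fintype.card α < Fintype.card β → ∀ (a : Matrix α β (𝓞 K)) {A : ℝ},
      a ≠ 0 → (∀ k l, house (a k l : K) ≤ A) → ∃ ξ : β → 𝓞 K, ξ ≠ 0 ∧ a.mulVec ξ = 0 ∧
        ∀ l, house (ξ l : K) ≤ c * (c * Fintype.card β * A) ^
          ((Fintype.card α : ℝ) / (Fintype.card β - Fintype.card α)) :=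
    ⟨_, fun {_ _} _ _ hα hαβ a {_} ha hA ↦
      house.exists_ne_zero_int_vec_house_le K a ha hα hαβ rfl hA rfl⟩
  refine ⟨1 + c ^ 2, le_add_of_nonneg_right (sq_nonneg _), fun {α β} _ _ hα hβ a {A} ha hA ↦ ?_⟩
  obtain ⟨ξ, hξ, hmul, hle⟩ := hc hα (by omega) a ha hA
  refine ⟨ξ, hξ, hmul, fun l ↦ (hle l).trans ?_⟩
  have hα' : (Fintype.card α : ℝ) ≠ 0 := mod_cast hα.ne'
  have hexp : (Fintype.card α : ℝ) / (Fintype.card β - Fintype.card α) = 1 := by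
    rw [hβ]
    push_cast
    rw [two_mul, add_sub_cancel_right, div_self hα']
  obtain ⟨k⟩ := Fintype.card_pos_iff.1 hα
  have hA₀ : 0 ≤ A := (house_nonneg _).trans (hA k l)
  have : 0 ≤ (Fintype.card β : ℝ) * A := by positivity
  rw [hexp, Real.rpow_one]
  linarith

end House

section Monomial

variable {ι κ K : Type*} [Fintype ι] [Fintype κ] [Field K] {L S : ℕ} {H : ℝ}
  {α : ι → κ → 𝓞 K} {δ : 𝓞 K} {t : κ → ℕ}

/-- With `α i j = δ * exp (x i * y j)`, the algebraic integer `δ ^ (#ι * L * ∑ j, t j)` times the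
monomial `exp ((∑ i, l i • x i) * ∑ j, t j • y j)` of the auxiliary function at a lattice point. The
complementary exponents `L - l i` of the denominator `δ` make the power of `δ` independent of `l`,
so that it factors out of a linear combination over `l`. -/
noncomputable def clearedMonomial (α : ι → κ → 𝓞 K) (δ : 𝓞 K) (L : ℕ) (t : κ → ℕ)
    (l : ι → Fin L) : 𝓞 K :=
  ∏ i, ∏ j, (α i j ^ (l i : ℕ) * δ ^ (L - l i)) ^ t j

theorem clearedMonomial_zero (α : ι → κ → 𝓞 K) (δ : 𝓞 K) (l : ι → Fin L) :
    clearedMonomial α δ L 0 l = 1 := by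
  simp [clearedMonomial]

variable {φ : K →+* ℂ} {x : ι → ℂ} {y : κ → ℂ}

theorem map_clearedMonomial (h : ∀ i j, φ (α i j) = φ δ * Complex.exp (x i * y j)) (t : κ → ℕ)
    (l : ι → Fin L) :
    φ (clearedMonomial α δ L t l) = φ δ ^ (Fintype.card ι * ((∑ j, t j) * L)) *
      Complex.exp ((∑ i, (l i : ℕ) • x i) * ∑ j, t j • y j) := by
  have hfactor : ∀ i j, (φ (α i j) ^ (l i : ℕ) * φ δ ^ (L - l i)) ^ t j =
      (φ δ ^ L) ^ t j * Complex.exp ((l i : ℕ) • x i * t j • y j) := fun i j ↦ by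
    have hL : φ δ ^ L = φ δ ^ (l i : ℕ) * φ δ ^ (L - l i) := by
      rw [← pow_add, Nat.add_sub_cancel' (l i).2.le]
    rw [h, hL, smul_mul_smul_comm, mul_comm (l i : ℕ), mul_smul, nsmul_eq_mul, Complex.exp_nat_mul,
      nsmul_eq_mul, Complex.exp_nat_mul]
    ring
  simp only [clearedMonomial, map_prod, map_pow, map_mul, hfactor, Finset.prod_mul_distrib,
    Finset.prod_pow_eq_pow_sum, Finset.sum_const, Finset.card_univ, smul_eq_mul, ← Complex.exp_sum,
    ← Finset.mul_sum, ← Finset.sum_mul]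
  ring

variable [NumberField K]

theorem house_clearedMonomial_le (hH : 1 ≤ H) (hα : ∀ i j, house (α i j : K) ≤ H)
    (hδ : house (δ : K) ≤ H) (ht : ∀ j, t j ≤ S) (l : ι → Fin L) :
    house (clearedMonomial α δ L t l : K) ≤
      H ^ (Fintype.card ι * Fintype.card κ * (S * L)) := by
  have hfactor : ∀ i j, house (((α i j : K) ^ (l i : ℕ) * (δ : K) ^ (L - l i)) ^ t j) ≤
      H ^ (S * L) := fun i j ↦ by
    have hpow : ∀ {β : K}, house β ≤ H → ∀ n, house (β ^ n) ≤ H ^ n := fun hβ n ↦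
      (house_pow_le _ _).trans (pow_le_pow_left₀ (house_nonneg _) hβ n)
    calc house (((α i j : K) ^ (l i : ℕ) * (δ : K) ^ (L - l i)) ^ t j)
        ≤ house ((α i j : K) ^ (l i : ℕ) * (δ : K) ^ (L - l i)) ^ t j := house_pow_le _ _
      _ ≤ (H ^ (l i : ℕ) * H ^ (L - l i)) ^ t j := by
          gcongr
          · exact house_nonneg _
          · exact (house_mul_le _ _).trans
              (mul_le_mul (hpow (hα i j) _) (hpow hδ _) (house_nonneg _) (by positivity))
      _ = H ^ (t j * L) := by rw [← pow_add, Nat.add_sub_cancel' (l i).2.le, ← pow_mul, mul_comm]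
      _ ≤ H ^ (S * L) := pow_le_pow_right₀ hH (Nat.mul_le_mul_right L (ht j))
  calc house (clearedMonomial α δ L t l : K)
      = house (∏ i, ∏ j, ((α i j : K) ^ (l i : ℕ) * (δ : K) ^ (L - l i)) ^ t j) := by
        simp only [clearedMonomial, map_prod, map_pow, map_mul]
    _ ≤ ∏ _i : ι, ∏ _j : κ, H ^ (S * L) := by
        refine (house_prod_le_prod_house _ _).trans
          (Finset.prod_le_prod (fun _ _ ↦ house_nonneg _) fun i _ ↦ ?_)
        exact (house_prod_le_prod_house _ _).trans
          (Finset.prod_le_prod (fun _ _ ↦ house_nonneg _) fun j _ ↦ hfactor i j)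
    _ = H ^ (Fintype.card ι * Fintype.card κ * (S * L)) := by
        simp only [Finset.prod_const, Finset.card_univ, ← pow_mul]
        congr 1
        ring

theorem norm_map_pow_le (hH : 1 ≤ H) (hδ : house (δ : K) ≤ H) (ht : ∀ j, t j ≤ S) :
    ‖φ δ ^ (Fintype.card ι * ((∑ j, t j) * L))‖ ≤
      H ^ (Fintype.card ι * Fintype.card κ * (S * L)) := by
  have hsum : ∑ j, t j ≤ Fintype.card κ * S := Finset.sum_le_card_nsmul _ _ _ fun j _ ↦ ht j
  rw [norm_pow]
  calc ‖φ δ‖ ^ (Fintype.card ι * ((∑ j, t j) * L))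
      ≤ H ^ (Fintype.card ι * ((∑ j, t j) * L)) := by
        gcongr
        exact (norm_embedding_le_house _ φ).trans hδ
    _ ≤ H ^ (Fintype.card ι * (Fintype.card κ * S * L)) := by gcongr
    _ = _ := by ring_nf

variable [DecidableEq ι]

theorem house_clearedMonomial_dotProduct_le (hH : 1 ≤ H) (hα : ∀ i j, house (α i j : K) ≤ H)
    (hδ : house (δ : K) ≤ H) (ht : ∀ j, t j ≤ S) {ξ : (ι → Fin L) → 𝓞 K} {B : ℝ}
    (hξ : ∀ l, house (ξ l : K) ≤ B) :
    house ((clearedMonomial α δ L t ⬝ᵥ ξ : 𝓞 K) : K) ≤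
      Fintype.card (ι → Fin L) * (H ^ (Fintype.card ι * Fintype.card κ * (S * L)) * B) := by
  simp only [dotProduct, map_sum, map_mul]
  calc _ ≤ ∑ l : ι → Fin L, house ((clearedMonomial α δ L t l : K) * (ξ l : K)) :=
        house_sum_le_sum_house _ _
    _ ≤ ∑ _l : ι → Fin L, H ^ (Fintype.card ι * Fintype.card κ * (S * L)) * B :=
        Finset.sum_le_sum fun l _ ↦ (house_mul_le _ _).trans
          (mul_le_mul (house_clearedMonomial_le hH hα hδ ht l) (hξ l) (house_nonneg _)
            (by positivity))
    _ = _ := by rw [Finset.sum_const, Finset.card_univ, nsmul_eq_mul]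

theorem map_clearedMonomial_dotProduct (h : ∀ i j, φ (α i j) = φ δ * Complex.exp (x i * y j))
    (t : κ → ℕ) (ξ : (ι → Fin L) → 𝓞 K) :
    φ (clearedMonomial α δ L t ⬝ᵥ ξ : 𝓞 K) = φ δ ^ (Fintype.card ι * ((∑ j, t j) * L)) *
      expSum (fun l : ι → Fin L ↦ ∑ i, (l i : ℕ) • x i) (fun l ↦ φ (ξ l)) (∑ j, t j • y j) := by
  simp only [dotProduct, map_sum, map_mul, map_clearedMonomial h, expSum, Finset.mul_sum]
  exact Finset.sum_congr rfl fun l _ ↦ by ring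

theorem expSum_eq_zero_iff_clearedMonomial_dotProduct_eq_zero (hδ : δ ≠ 0)
    (h : ∀ i j, φ (α i j) = φ δ * Complex.exp (x i * y j)) (t : κ → ℕ) (ξ : (ι → Fin L) → 𝓞 K) :
    expSum (fun l : ι → Fin L ↦ ∑ i, (l i : ℕ) • x i) (fun l ↦ φ (ξ l)) (∑ j, t j • y j) = 0 ↔
      clearedMonomial α δ L t ⬝ᵥ ξ = 0 := by
  have hφδ : φ δ ≠ 0 := by simpa using hδ
  rw [← RingOfIntegers.coe_eq_zero_iff (K := K), ← map_eq_zero φ, map_clearedMonomial_dotProduct h,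
    mul_eq_zero, or_iff_right (pow_ne_zero _ hφδ)]

theorem norm_map_clearedMonomial_dotProduct_le (hδ₀ : δ ≠ 0)
    (h : ∀ i j, φ (α i j) = φ δ * Complex.exp (x i * y j)) (hy : LinearIndependent ℕ y)
    (hH : 1 ≤ H) (hδ : house (δ : K) ≤ H) {ξ : (ι → Fin L) → 𝓞 K} {B : ℝ}
    (hξ : ∀ l, house (ξ l : K) ≤ B) (hS : 0 < S)
    (hzero : ∀ t : κ → ℕ, (∀ j, t j < S) → clearedMonomial α δ L t ⬝ᵥ ξ = 0)
    (ht : ∀ j, t j ≤ S) :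
    ‖φ (clearedMonomial α δ L t ⬝ᵥ ξ : 𝓞 K)‖ ≤ (1 / 2) ^ S ^ Fintype.card κ *
      (Fintype.card (ι → Fin L) * B * H ^ (Fintype.card ι * Fintype.card κ * (S * L)) *
        Real.exp (5 * (∑ i, ‖x i‖) * (1 + ∑ j, ‖y j‖)) ^ (S * L)) := by
  have hw : ∀ l : ι → Fin L, ‖∑ i, (l i : ℕ) • x i‖ ≤ L * ∑ i, ‖x i‖ := fun l ↦
    norm_sum_nsmul_le (fun i ↦ (l i).2.le) x
  have hφξ : ∀ l, ‖φ (ξ l)‖ ≤ B := fun l ↦ (norm_embedding_le_house _ φ).trans (hξ l)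
  have hsmall := norm_expSum_le_of_forall_lt_eq_zero hw hφξ hy hS
    (fun u hu ↦ (expSum_eq_zero_iff_clearedMonomial_dotProduct_eq_zero hδ₀ h u ξ).2 (hzero u hu)) ht
  have hexp : Real.exp (L * (∑ i, ‖x i‖) * (5 * (S * (1 + ∑ j, ‖y j‖)))) =
      Real.exp (5 * (∑ i, ‖x i‖) * (1 + ∑ j, ‖y j‖)) ^ (S * L) := by
    rw [← Real.exp_nat_mul]
    push_cast
    ring_nf
  rw [hexp] at hsmall
  rw [map_clearedMonomial_dotProduct h, norm_mul]
  refine (mul_le_mul (norm_map_pow_le hH hδ ht) hsmall (norm_nonneg _) (by positivity)).trans_eq ?_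
  ring

theorem clearedMonomial_dotProduct_eq_zero_of_forall_lt (hδ₀ : δ ≠ 0)
    (h : ∀ i j, φ (α i j) = φ δ * Complex.exp (x i * y j)) (hy : LinearIndependent ℕ y)
    (hH : 1 ≤ H) (hα : ∀ i j, house (α i j : K) ≤ H) (hδ : house (δ : K) ≤ H)
    {ξ : (ι → Fin L) → 𝓞 K} {B : ℝ} (hξ : ∀ l, house (ξ l : K) ≤ B) (hS : 0 < S)
    (hzero : ∀ t : κ → ℕ, (∀ j, t j < S) → clearedMonomial α δ L t ⬝ᵥ ξ = 0)
    (hlarge : (Fintype.card (ι → Fin L) * B * H ^ (Fintype.card ι * Fintype.card κ * (S * L)) *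
      Real.exp (5 * (∑ i, ‖x i‖) * (1 + ∑ j, ‖y j‖)) ^ (S * L)) ^ finrank ℚ K <
        2 ^ S ^ Fintype.card κ) (ht : ∀ j, t j ≤ S) :
    clearedMonomial α δ L t ⬝ᵥ ξ = 0 := by
  have hsmall := norm_map_clearedMonomial_dotProduct_le hδ₀ h hy hH hδ hξ hS hzero ht
  have hhouse := house_clearedMonomial_dotProduct_le hH hα hδ ht hξ
  set Q : ℝ := Fintype.card (ι → Fin L) * B * H ^ (Fintype.card ι * Fintype.card κ * (S * L)) *
    Real.exp (5 * (∑ i, ‖x i‖) * (1 + ∑ j, ‖y j‖)) ^ (S * L) with hQ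
  refine eq_zero_of_norm_embedding_mul_pow_lt_one φ hsmall (Q := Q) (hhouse.trans ?_) ?_
  · calc _ ≤ Fintype.card (ι → Fin L) * (H ^ (Fintype.card ι * Fintype.card κ * (S * L)) * B) *
          Real.exp (5 * (∑ i, ‖x i‖) * (1 + ∑ j, ‖y j‖)) ^ (S * L) :=
          le_mul_of_one_le_right ((house_nonneg _).trans hhouse)
            (one_le_pow₀ (Real.one_le_exp (by positivity)))
      _ = Q := by rw [hQ]; ring
  · rwa [mul_assoc, mul_pow_sub_one finrank_pos.ne', one_div, inv_pow, ← div_eq_inv_mul,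
      div_lt_one (by positivity)]

end Monomial

section Parameters

variable {C H G : ℝ}

theorem sq_mul_mul_pow_mul_pow_le_pow (hC : 1 ≤ C) (hH : 1 ≤ H) (hG : 1 ≤ G) {M L S : ℕ}
    (hL : 0 < L) (hS : 0 < S) (hMS : M ≤ S) :
    (L : ℝ) ^ 2 * (C * L ^ 2 * H ^ (6 * (M * L))) * H ^ (6 * (S * L)) * G ^ (S * L) ≤
      (16 * C * H ^ 12 * G) ^ (S * L) := by
  have hLpow : (L : ℝ) ^ 4 ≤ 16 ^ (S * L) := by
    have : L ^ 4 ≤ 16 ^ (S * L) := calc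
      L ^ 4 ≤ (2 ^ L) ^ 4 := Nat.pow_le_pow_left Nat.lt_two_pow_self.le 4
      _ = 16 ^ L := by rw [pow_right_comm]; norm_num
      _ ≤ 16 ^ (S * L) := Nat.pow_le_pow_right (by norm_num) (Nat.le_mul_of_pos_left L hS)
    exact_mod_cast this
  have hCpow : C ≤ C ^ (S * L) := le_self_pow₀ hC (Nat.mul_pos hS hL).ne'
  have hHpow : H ^ (6 * (M * L)) ≤ H ^ (6 * (S * L)) := by gcongr
  calc _ = (L : ℝ) ^ 4 * C * H ^ (6 * (M * L)) * H ^ (6 * (S * L)) * G ^ (S * L) := by ring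
    _ ≤ 16 ^ (S * L) * C ^ (S * L) * H ^ (6 * (S * L)) * H ^ (6 * (S * L)) * G ^ (S * L) := by
        gcongr
    _ = _ := by simp only [mul_pow, ← pow_mul]; ring

/-- `L ^ 2` is the number of unknowns and `M ^ 3` the number of equations for Siegel's lemma; the
left-hand side of the inequality is the bound that has to be beaten when extrapolating the zeros of
the auxiliary function from the cube of side `S` to the cube of side `S + 1`. -/
theorem exists_forall_pow_lt_two_pow_cube (hC : 1 ≤ C) (hH : 1 ≤ H) (hG : 1 ≤ G) (d : ℕ) :
    ∃ M L : ℕ, 0 < M ∧ L ^ 2 = 2 * M ^ 3 ∧ ∀ S ≥ M,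
      ((L : ℝ) ^ 2 * (C * L ^ 2 * H ^ (6 * (M * L))) * H ^ (6 * (S * L)) * G ^ (S * L)) ^ d <
        2 ^ S ^ 3 := by
  set E := 16 * C * H ^ 12 * G
  have hE : 1 ≤ E := by
    have := one_le_mul_of_one_le_of_one_le
      (one_le_mul_of_one_le_of_one_le hC (one_le_pow₀ (n := 12) hH)) hG
    linarith
  obtain ⟨m, hm⟩ := pow_unbounded_of_one_lt (E ^ d) (one_lt_two (α := ℝ))
  have hm₀ : 0 < m := by
    refine Nat.pos_of_ne_zero fun h ↦ ?_
    rw [h, pow_zero] at hm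
    exact hm.not_ge (one_le_pow₀ hE)
  -- These `M` and `L` satisfy both `L ^ 2 = 2 * M ^ 3` and `m * L = M ^ 2`.
  refine ⟨2 * m ^ 2, 4 * m ^ 3, by positivity, by ring, fun S hMS ↦ ?_⟩
  have hS : 0 < S := (by positivity : 0 < 2 * m ^ 2).trans_le hMS
  have hmS : m * (S * (4 * m ^ 3)) ≤ S ^ 3 := calc
    m * (S * (4 * m ^ 3)) = S * (2 * m ^ 2) ^ 2 := by ring
    _ ≤ S * S ^ 2 := by gcongr
    _ = S ^ 3 := by ring
  calc _ ≤ (E ^ (S * (4 * m ^ 3))) ^ d := by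
        gcongr
        exact sq_mul_mul_pow_mul_pow_le_pow hC hH hG (by positivity) hS hMS
    _ = (E ^ d) ^ (S * (4 * m ^ 3)) := pow_right_comm ..
    _ < (2 ^ m) ^ (S * (4 * m ^ 3)) := by
        gcongr
    _ = 2 ^ (m * (S * (4 * m ^ 3))) := (pow_mul ..).symm
    _ ≤ 2 ^ S ^ 3 := by gcongr; norm_num

end Parameters

section SixExponentials

theorem exists_ne_zero_forall_clearedMonomial_dotProduct_eq_zero {K : Type*} [Field K]
    [NumberField K] {φ : K →+* ℂ} {x : Fin 2 → ℂ} {y : Fin 3 → ℂ}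
    (hy : LinearIndependent ℕ y) {α : Fin 2 → Fin 3 → 𝓞 K} {δ : 𝓞 K} (hδ₀ : δ ≠ 0)
    (h : ∀ i j, φ (α i j) = φ δ * Complex.exp (x i * y j)) :
    ∃ (L : ℕ) (ξ : (Fin 2 → Fin L) → 𝓞 K), ξ ≠ 0 ∧
      ∀ t, clearedMonomial α δ L t ⬝ᵥ ξ = 0 := by
  obtain ⟨H₀, hH₀⟩ := Finite.exists_le fun p : Fin 2 × Fin 3 ↦ house (α p.1 p.2 : K)
  let H := max 1 (max H₀ (house (δ : K)))
  have hH : 1 ≤ H := le_max_left ..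
  have hα : ∀ i j, house (α i j : K) ≤ H := fun i j ↦
    (hH₀ (i, j)).trans ((le_max_left ..).trans (le_max_right ..))
  have hδ : house (δ : K) ≤ H := (le_max_right ..).trans (le_max_right ..)
  obtain ⟨C, hC, hsiegel⟩ := exists_ne_zero_mulVec_eq_zero_house_le K
  obtain ⟨M, L, hM, hML, hlarge⟩ := exists_forall_pow_lt_two_pow_cube hC hH
    (Real.one_le_exp (by positivity : 0 ≤ 5 * (∑ i, ‖x i‖) * (1 + ∑ j, ‖y j‖))) (finrank ℚ K)
  let a : Matrix (Fin 3 → Fin M) (Fin 2 → Fin L) (𝓞 K) :=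
    fun t ↦ clearedMonomial α δ L fun j ↦ t j
  have hL : 0 < L := Nat.pos_of_ne_zero fun h ↦ by simp [h, hM.ne'] at hML
  have ha : a ≠ 0 := fun ha ↦ one_ne_zero <|
    (clearedMonomial_zero α δ fun _ ↦ ⟨0, hL⟩).symm.trans (congrFun₂ ha (fun _ ↦ ⟨0, hM⟩) _)
  obtain ⟨ξ, hξ₀, hmul, hξ⟩ := hsiegel (by simp [hM]) (by simp [hML]) a ha fun t l ↦
    house_clearedMonomial_le hH hα hδ (fun j ↦ (t j).2.le) l
  have hvanish : ∀ S ≥ M, ∀ t : Fin 3 → ℕ, (∀ j, t j < S) →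
      clearedMonomial α δ L t ⬝ᵥ ξ = 0 := by
    intro S hS
    induction S, hS using Nat.le_induction with
    | base => exact fun t ht ↦ congrFun hmul fun j ↦ ⟨t j, ht j⟩
    | succ S hMS ih =>
      intro t ht
      refine clearedMonomial_dotProduct_eq_zero_of_forall_lt hδ₀ h hy hH hα hδ hξ (hM.trans_le hMS)
        ih ?_ fun j ↦ Nat.lt_succ_iff.1 (ht j)
      simpa using hlarge S hMS
  refine ⟨L, ξ, hξ₀, fun t ↦ ?_⟩
  obtain ⟨b, hb⟩ := Finite.exists_le t
  exact hvanish (max M (b + 1)) (le_max_left ..) t fun j ↦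
    (Nat.lt_succ_of_le (hb j)).trans_le (le_max_right ..)

theorem exists_numberField_integral_multiples {σ : Type*} [Finite σ] {a : σ → ℂ}
    (ha : ∀ s, IsAlgebraic ℚ (a s)) :
    ∃ K : IntermediateField ℚ ℂ, NumberField K ∧ ∃ δ : 𝓞 K, δ ≠ 0 ∧ ∃ α : σ → 𝓞 K,
      ∀ s, algebraMap K ℂ (α s) = algebraMap K ℂ δ * a s := by
  let K := IntermediateField.adjoin ℚ (Set.range a)
  have : FiniteDimensional ℚ K := IntermediateField.finiteDimensional_adjoin <| by
    rintro _ ⟨s, rfl⟩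
    exact (ha s).isIntegral
  have : NumberField K := { }
  let aK : σ → K := fun s ↦ ⟨a s, IntermediateField.subset_adjoin ℚ _ ⟨s, rfl⟩⟩
  obtain ⟨δ, hδ⟩ :=
    IsLocalization.exist_integer_multiples_of_finite (nonZeroDivisors (𝓞 K)) aK
  choose α hα using hδ
  refine ⟨K, this, δ, nonZeroDivisors.coe_ne_zero δ, α, fun s ↦ ?_⟩
  rw [show ((α s : 𝓞 K) : K) = δ • aK s from hα s]
  rfl

theorem six_exponentials {x : Fin 2 → ℂ} {y : Fin 3 → ℂ} (hx : LinearIndependent ℚ x)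
    (hy : LinearIndependent ℚ y) : ∃ i j, Transcendental ℚ (Complex.exp (x i * y j)) := by
  by_contra! halg
  simp only [Transcendental, not_not] at halg
  obtain ⟨K, _, δ, hδ, α, hα⟩ := exists_numberField_integral_multiples
    (a := fun p : Fin 2 × Fin 3 ↦ Complex.exp (x p.1 * y p.2)) fun p ↦ halg p.1 p.2
  have h : ∀ i j, algebraMap K ℂ (α (i, j)) = algebraMap K ℂ δ * Complex.exp (x i * y j) :=
    fun i j ↦ hα (i, j)
  obtain ⟨L, ξ, hξ, hzero⟩ := exists_ne_zero_forall_clearedMonomial_dotProduct_eq_zero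
    (hy.restrict_scalars' ℕ) (α := fun i j ↦ α (i, j)) hδ h
  have hcoeff := eq_zero_of_forall_expSum_eq_zero hy
    (injective_sum_nsmul (hx.restrict_scalars' ℕ) L) fun t ↦
      (expSum_eq_zero_iff_clearedMonomial_dotProduct_eq_zero hδ h t ξ).2 (hzero t)
  refine hξ (funext fun l ↦ ?_)
  simpa using congrFun hcoeff l

theorem stmt_9_general {c : ℂ} {y : Fin 3 → ℂ} (hy : LinearIndependent ℚ y)
    (hexp : ∀ j, IsAlgebraic ℚ (Complex.exp (y j)))
    (hexp_mul : ∀ j, IsAlgebraic ℚ (Complex.exp (c * y j))) : ∃ q : ℚ, c = q := by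
  by_contra! hc
  have hx : LinearIndependent ℚ ![1, c] :=
    (LinearIndependent.pair_iff' one_ne_zero).2 fun q hq ↦
      hc q (by simpa [Algebra.smul_def] using hq.symm)
  obtain ⟨i, j, hij⟩ := six_exponentials hx hy
  fin_cases i
  · exact hij (by simpa using hexp j)
  · exact hij (by simpa using hexp_mul j)

end SixExponentials

section LogPrimes

theorem linearIndependent_rat_log_primes :
    LinearIndependent ℚ fun p : Nat.Primes ↦ Real.log p := by
  rw [← LinearIndependent.iff_fractionRing ℤ ℚ, linearIndependent_iff']
  intro s k hk q hq
  have : Fact (q : ℕ).Prime := ⟨q.2⟩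
  have hprod_real : ∏ p ∈ s, ((p : ℕ) : ℝ) ^ k p = 1 := by
    have hpos : ∀ p : Nat.Primes, (0 : ℝ) < (p : ℕ) := fun p ↦ mod_cast p.2.pos
    refine Real.eq_one_of_pos_of_log_eq_zero
      (Finset.prod_pos fun p _ ↦ zpow_pos (hpos p) _) ?_
    rw [Real.log_prod fun p _ ↦ (zpow_pos (hpos p) _).ne', ← hk]
    simp only [Real.log_zpow, zsmul_eq_mul]
  have hprod : ∏ p ∈ s, ((p : ℕ) : ℚ) ^ k p = 1 := by
    rw [← Rat.cast_inj (α := ℝ)]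
    simpa using hprod_real
  have hnorm : ∏ p ∈ s, ‖((p : ℕ) : ℚ_[q])‖ ^ k p = 1 := by
    simpa using congrArg (fun x : ℚ ↦ ‖(x : ℚ_[q])‖) hprod
  have hnorm_ne : ∀ p ∈ s, p ≠ q → ‖((p : ℕ) : ℚ_[q])‖ ^ k p = 1 := fun p _ hpq ↦ by
    rw [Padic.norm_natCast_eq_one_iff.2, one_zpow]
    exact (Nat.coprime_primes q.2 p.2).2 (Subtype.coe_injective.ne hpq.symm)
  rw [Finset.prod_eq_single_of_mem q hq hnorm_ne, Padic.norm_p] at hnorm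
  rwa [zpow_eq_one_iff_right₀ (by positivity)
    (inv_lt_one_of_one_lt₀ (mod_cast q.2.one_lt)).ne] at hnorm

theorem linearIndependent_rat_ofReal_log_of_prime {κ : Type*} {P : κ → ℕ}
    (hP : ∀ j, (P j).Prime) (hinj : Function.Injective P) :
    LinearIndependent ℚ fun j ↦ (Real.log (P j) : ℂ) := by
  have hinj' : Function.Injective fun j ↦ (⟨P j, hP j⟩ : Nat.Primes) := fun _ _ hij ↦
    hinj (Subtype.ext_iff.1 hij)
  exact (linearIndependent_rat_log_primes.comp _ hinj').map'
    (Complex.ofRealCLM.toLinearMap.restrictScalars ℚ)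
    (LinearMap.ker_eq_bot.2 Complex.ofReal_injective)

theorem isAlgebraic_exp_log_natCast {n : ℕ} (hn : 0 < n) :
    IsAlgebraic ℚ (Complex.exp (Real.log n)) := by
  rw [← Complex.ofReal_exp, Real.exp_log (mod_cast hn), Complex.ofReal_natCast]
  exact isAlgebraic_natCast n

end LogPrimes

/-- Corollary of the six exponentials theorem: if `c ∈ ℂ` is such that `p^c` is
algebraic over `ℚ` for at least three distinct primes `p`, then `c ∈ ℚ`. -/
theorem stmt_9 (c : ℂ)
    (h : ∃ p q r : ℕ, p.Prime ∧ q.Prime ∧ r.Prime ∧ p ≠ q ∧ q ≠ r ∧ p ≠ r ∧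
      IsAlgebraic ℚ (Complex.exp (c * Real.log p)) ∧
      IsAlgebraic ℚ (Complex.exp (c * Real.log q)) ∧
      IsAlgebraic ℚ (Complex.exp (c * Real.log r))) :
    ∃ x : ℚ, c = (x : ℂ) := by
  obtain ⟨p, q, r, hp, hq, hr, hpq, hqr, hpr, hcp, hcq, hcr⟩ := h
  have hP : ∀ j, (![p, q, r] j).Prime :=
    Fin.forall_fin_succ.2 ⟨hp, Fin.forall_fin_two.2 ⟨hq, hr⟩⟩
  have hinj : Function.Injective ![p, q, r] :=
    List.nodup_ofFn.1 (by simp [hpq, hqr, hpr])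
  exact stmt_9_general (linearIndependent_rat_ofReal_log_of_prime hP hinj)
    (fun j ↦ isAlgebraic_exp_log_natCast (hP j).pos)
    (Fin.forall_fin_succ.2 ⟨hcp, Fin.forall_fin_two.2 ⟨hcq, hcr⟩⟩)
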